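/- Let m_i, m_e, ν_i, ν_e, T_i, T_e, e, c > 0 with q_i = e, q_e = −e. There exist constants C, λ > 0 such that for every k ∈ ℝ³, every solution (ρ̂_i, ρ̂_e, û_i, û_e, Ê, B̂) of the Fourier-transformed linearized two-fluid Euler–Maxwell system at frequency k satisfies |Û(t)| ≤ C exp(−λ|k|²t/(1+|k|²)²) |Û(0)| for all t ≥ 0. -/

import Mathlib

open Real Complex

/-- Squared Hermitian norm on `ℂ³`. -/
noncomputable def hsq (v : Fin 3 → ℂ) : ℝ := ∑ j, Complex.normSq (v j)

/-- Cross product on `ℂ³`. -/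
def cross3 (u v : Fin 3 → ℂ) : Fin 3 → ℂ :=
  ![u 1 * v 2 - u 2 * v 1, u 2 * v 0 - u 0 * v 2, u 0 * v 1 - u 1 * v 0]

/-- The vector `i k` with components `i k_j`. -/
def ikv (k : Fin 3 → ℝ) : Fin 3 → ℂ := fun j => Complex.I * (k j : ℂ)

/-!
Friction dissipates only the velocities in the energy. The cross terms `⟨u, ∇ρ⟩`, `-⟨u, E⟩` and
`-⟨E, curl B⟩` transfer this dissipation to `ρ`, `E` and `B`: by the Gauss law the field contributes
a further loss to the first one, the second feels `E` through the electric force on a charged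
species, and the Ampère law brings `|k|²|B|²` into the third. At frequency `k` the cross terms enter
with weights `(1 + |k|²)⁻¹`, `|k|² (1 + |k|²)⁻²` and `(1 + |k|²)⁻²` relative to the energy. These
are small enough to keep the functional equivalent to `|U|²` and to absorb the indefinite terms, and
the total loss is of order `|k|² (1 + |k|²)⁻² |U|²`, so the Grönwall inequality concludes.
-/

namespace EulerMaxwell

open Set WithLp
open scoped InnerProductSpace

theorem norm_sum_smul_sq_le {ι F : Type*} [Fintype ι] [SeminormedAddCommGroup F] [NormedSpace ℝ F]
    (a : ι → ℝ) (v : ι → F) :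
    ‖∑ α, a α • v α‖ ^ 2 ≤ (∑ α, a α ^ 2) * ∑ α, ‖v α‖ ^ 2 := by
  calc ‖∑ α, a α • v α‖ ^ 2 ≤ (∑ α, |a α| * ‖v α‖) ^ 2 := by
        gcongr
        exact (norm_sum_le _ _).trans_eq (by simp only [norm_smul, norm_eq_abs])
    _ ≤ (∑ α, |a α| ^ 2) * ∑ α, ‖v α‖ ^ 2 := Finset.sum_mul_sq_le_sq_mul_sq _ _ _
    _ = (∑ α, a α ^ 2) * ∑ α, ‖v α‖ ^ 2 := by simp only [sq_abs]

theorem exists_pos_mul_sum_le {ι : Type*} [Fintype ι] {f : ι → ℝ} (hf : ∀ α, 0 < f α) :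
    ∃ δ > 0, ∀ g : ι → ℝ, 0 ≤ g → δ * ∑ α, g α ≤ ∑ α, f α * g α := by
  obtain ⟨δ, hδ, hδf⟩ := Pi.exists_forall_pos_add_lt hf
  refine ⟨δ, hδ, fun g hg ↦ ?_⟩
  rw [Finset.mul_sum]
  gcongr with α
  · exact hg α
  · simpa using (hδf α).le

theorem exists_sum_mul_le {ι : Type*} [Fintype ι] (f : ι → ℝ) :
    ∃ M ≥ 0, ∀ g : ι → ℝ, 0 ≤ g → ∑ α, f α * g α ≤ M * ∑ α, g α := by
  obtain ⟨M, hM⟩ := Finite.exists_le f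
  refine ⟨max M 0, le_max_right _ _, fun g hg ↦ ?_⟩
  rw [Finset.mul_sum]
  gcongr with α
  · exact hg α
  · exact (hM α).trans (le_max_left _ _)

section InnerProductEstimates

variable {F : Type*} [NormedAddCommGroup F] [InnerProductSpace ℝ F]

theorem mul_inner_le_sq_norm_add (a : ℝ) {ε : ℝ} (hε : 0 < ε) (x y : F) :
    a * ⟪x, y⟫_ℝ ≤ a ^ 2 / (4 * ε) * ‖x‖ ^ 2 + ε * ‖y‖ ^ 2 := by
  have hsq := norm_sub_sq_real (a • x) ((2 * ε) • y)
  simp only [real_inner_smul_left, real_inner_smul_right, norm_smul, mul_pow, norm_eq_abs,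
    sq_abs] at hsq
  have hnonneg : 0 ≤ ‖a • x - (2 * ε) • y‖ ^ 2 / (4 * ε) := by positivity
  rw [hsq] at hnonneg
  refine sub_nonneg.1 (hnonneg.trans_eq ?_)
  field_simp
  ring

theorem abs_inner_le_add_sq_norm (x y : F) : |⟪x, y⟫_ℝ| ≤ ‖x‖ ^ 2 + ‖y‖ ^ 2 := by
  refine (abs_real_inner_le_norm x y).trans ?_
  nlinarith [sq_nonneg (‖x‖ - ‖y‖), sq_nonneg ‖x‖, sq_nonneg ‖y‖]

end InnerProductEstimates

section FourierCalculus

/-- The wave vectors and, in their complexification, the Fourier coefficients of vector fields. -/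
abbrev Vec (𝕜 : Type*) := EuclideanSpace 𝕜 (Fin 3)

/-- The Fourier symbol `r ↦ i k r` of the gradient. -/
noncomputable def grad (k : Vec ℝ) : ℂ →L[ℝ] Vec ℂ :=
  LinearMap.toContinuousLinearMap
    { toFun r := toLp 2 fun j ↦ ikv k.ofLp j * r
      map_add' r r' := by ext j; simp [mul_add]
      map_smul' a r := by ext j; simp [mul_left_comm] }

/-- The Fourier symbol `v ↦ i k · v` of the divergence. -/
noncomputable def div (k : Vec ℝ) (v : Vec ℂ) : ℂ := ∑ j, ikv k.ofLp j * v j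

/-- The Fourier symbol `v ↦ i k × v` of the curl. -/
noncomputable def curl (k : Vec ℝ) : Vec ℂ →L[ℝ] Vec ℂ :=
  LinearMap.toContinuousLinearMap
    { toFun v := toLp 2 (cross3 (ikv k.ofLp) v.ofLp)
      map_add' v w := by
        ext j
        fin_cases j <;> simp only [cross3, PiLp.add_apply, Fin.zero_eta, Fin.mk_one,
          Fin.reduceFinMk, Matrix.cons_val] <;> ring
      map_smul' a v := by
        ext j
        fin_cases j <;> simp only [cross3, PiLp.smul_apply, real_smul, Fin.zero_eta, Fin.mk_one,
          Fin.reduceFinMk, Matrix.cons_val, RingHom.id_apply] <;> ring }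

variable (k : Vec ℝ)

theorem grad_apply (r : ℂ) (j : Fin 3) : grad k r j = ikv k.ofLp j * r := rfl

theorem curl_apply (v : Vec ℂ) (j : Fin 3) : curl k v j = cross3 (ikv k.ofLp) v.ofLp j := rfl

theorem inner_grad_right (v : Vec ℂ) (r : ℂ) : ⟪v, grad k r⟫_ℝ = -⟪div k v, r⟫_ℝ := by
  simp only [PiLp.inner_apply, grad_apply, div, ikv, Complex.inner, Fin.sum_univ_three, map_add,
    map_mul, conj_I, conj_ofReal, mul_re, mul_im, add_re, add_im, neg_re, neg_im, conj_re, conj_im,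
    I_re, I_im, ofReal_re, ofReal_im]
  ring

theorem norm_grad_sq (r : ℂ) : ‖grad k r‖ ^ 2 = ‖k‖ ^ 2 * ‖r‖ ^ 2 := by
  simp only [EuclideanSpace.norm_sq_eq, grad_apply, ikv, Complex.norm_mul, norm_I, norm_real,
    one_mul, mul_pow, Finset.sum_mul]

theorem inner_curl_left (v w : Vec ℂ) : ⟪curl k v, w⟫_ℝ = ⟪v, curl k w⟫_ℝ := by
  simp only [PiLp.inner_apply, curl_apply, cross3, ikv, Complex.inner, Fin.sum_univ_three,
    Matrix.cons_val, sub_re, sub_im, mul_re, mul_im, conj_re, conj_im, I_re, I_im, ofReal_re,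
    ofReal_im]
  ring

theorem norm_curl_sq_add_norm_div_sq (v : Vec ℂ) :
    ‖curl k v‖ ^ 2 + ‖div k v‖ ^ 2 = ‖k‖ ^ 2 * ‖v‖ ^ 2 := by
  simp only [EuclideanSpace.norm_sq_eq, curl_apply, cross3, div, ikv, norm_eq_abs, sq_abs,
    ← normSq_eq_norm_sq, normSq_apply, Fin.sum_univ_three, Matrix.cons_val, add_re, add_im, sub_re,
    sub_im, mul_re, mul_im, I_re, I_im, ofReal_re, ofReal_im]
  ring

theorem norm_curl_sq_le (v : Vec ℂ) : ‖curl k v‖ ^ 2 ≤ ‖k‖ ^ 2 * ‖v‖ ^ 2 := by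
  linarith [norm_curl_sq_add_norm_div_sq k v, sq_nonneg ‖div k v‖]

theorem norm_div_sq_le (v : Vec ℂ) : ‖div k v‖ ^ 2 ≤ ‖k‖ ^ 2 * ‖v‖ ^ 2 := by
  linarith [norm_curl_sq_add_norm_div_sq k v, sq_nonneg ‖curl k v‖]

end FourierCalculus

section Gronwall

theorem le_exp_mul_of_deriv_le_mul {f f' : ℝ → ℝ} {K : ℝ}
    (hf : ∀ t ≥ 0, HasDerivWithinAt f (f' t) (Ici 0) t) (hf' : ∀ t ≥ 0, f' t ≤ K * f t)
    {t : ℝ} (ht : 0 ≤ t) : f t ≤ f 0 * rexp (K * t) := by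
  have hcont : ContinuousOn f (Icc 0 t) := fun τ hτ ↦
    (hf τ hτ.1).continuousWithinAt.mono Icc_subset_Ici_self
  have hslope : ∀ τ ∈ Ico 0 t, ∀ r, f' τ < r →
      ∃ᶠ z in nhdsWithin τ (Ioi τ), (z - τ)⁻¹ * (f z - f τ) < r := fun τ hτ r hr ↦
    ((hf τ hτ.1).mono (Ici_subset_Ici.2 hτ.1)).liminf_right_slope_le hr
  simpa [gronwallBound_ε0] using le_gronwallBound_of_liminf_deriv_right_le hcont hslope le_rfl
    (fun τ hτ ↦ (hf' τ hτ.1).trans_eq (add_zero _).symm) t ⟨ht, le_rfl⟩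

theorem le_exp_mul_of_lyapunov {L L' n : ℝ → ℝ} {w c b : ℝ} (hw : 0 < w) (hc : 0 < c)
    (hb : 0 ≤ b) (hL : ∀ t ≥ 0, HasDerivWithinAt L (L' t) (Ici 0) t)
    (hL' : ∀ t ≥ 0, L' t ≤ -b * n t) (lower : ∀ t ≥ 0, w * n t ≤ L t)
    (upper : ∀ t ≥ 0, L t ≤ c * w * n t) {t : ℝ} (ht : 0 ≤ t) :
    n t ≤ c * n 0 * rexp (-(b / (c * w)) * t) := by
  have hrate : ∀ t ≥ 0, L' t ≤ -(b / (c * w)) * L t := fun t ht ↦ calc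
    L' t ≤ -b * n t := hL' t ht
    _ = -(b / (c * w)) * (c * w * n t) := by field_simp
    _ ≤ -(b / (c * w)) * L t :=
      mul_le_mul_of_nonpos_left (upper t ht) (neg_nonpos.2 (by positivity))
  refine le_of_mul_le_mul_left ?_ hw
  calc w * n t ≤ L 0 * rexp (-(b / (c * w)) * t) :=
        (lower t ht).trans (le_exp_mul_of_deriv_le_mul hL hrate ht)
    _ ≤ c * w * n 0 * rexp (-(b / (c * w)) * t) := by gcongr; exact upper 0 le_rfl
    _ = w * (c * n 0 * rexp (-(b / (c * w)) * t)) := by ring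

end Gronwall

section Plasma

/-- The constants of a multi-fluid plasma with one fluid for each species `α : ι`: masses `m`,
friction coefficients `ν`, temperatures `T`, charges `q`, and the speed of light `c`. -/
structure Plasma (ι : Type*) where
  m : ι → ℝ
  ν : ι → ℝ
  T : ι → ℝ
  q : ι → ℝ
  c : ℝ
  m_pos : ∀ α, 0 < m α
  ν_pos : ∀ α, 0 < ν α
  T_pos : ∀ α, 0 < T α
  c_pos : 0 < c

/-- The Fourier coefficients, at one frequency and one time, of the densities `ρ`, the velocities
`u`, the electric field `E` and the magnetic field `B`. -/
structure State (ι : Type*) where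
  ρ : ι → ℂ
  u : ι → Vec ℂ
  E : Vec ℂ
  B : Vec ℂ

variable {ι : Type*} [Fintype ι]

/-- The squared norm `|Û|²`. -/
noncomputable def State.normSq (X : State ι) : ℝ :=
  ∑ α, ‖X.ρ α‖ ^ 2 + ∑ α, ‖X.u α‖ ^ 2 + ‖X.E‖ ^ 2 + ‖X.B‖ ^ 2

theorem State.normSq_nonneg (X : State ι) : 0 ≤ X.normSq := by
  unfold State.normSq
  positivity

/-- The electric current `∑ q_α u_α`. -/
noncomputable def current (P : Plasma ι) (X : State ι) : Vec ℂ := ∑ α, P.q α • X.u α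

/-- The charge density `∑ q_α ρ_α`. -/
noncomputable def chargeDensity (P : Plasma ι) (X : State ι) : ℂ := ∑ α, P.q α • X.ρ α

/-- The Fourier-transformed linearized Euler–Maxwell system at frequency `k`, on the time interval
`[0, ∞)` and solved for the time derivatives. -/
structure IsSolution (P : Plasma ι) (k : Vec ℝ) (U : ℝ → State ι) : Prop where
  continuity : ∀ t ≥ 0, ∀ α,
    HasDerivWithinAt (fun τ ↦ (U τ).ρ α) (-div k ((U t).u α)) (Ici 0) t
  momentum : ∀ t ≥ 0, ∀ α, HasDerivWithinAt (fun τ ↦ (U τ).u α)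
    ((P.m α)⁻¹ • (P.q α • (U t).E - P.T α • grad k ((U t).ρ α)) - P.ν α • (U t).u α) (Ici 0) t
  ampere : ∀ t ≥ 0, HasDerivWithinAt (fun τ ↦ (U τ).E)
    (P.c • curl k (U t).B - (4 * π) • current P (U t)) (Ici 0) t
  faraday : ∀ t ≥ 0, HasDerivWithinAt (fun τ ↦ (U τ).B) (-(P.c • curl k (U t).E)) (Ici 0) t
  gauss : ∀ t ≥ 0, div k (U t).E = (4 * π) • chargeDensity P (U t)
  gauss_magnetic : ∀ t ≥ 0, div k (U t).B = 0

/-- The physical energy; friction only dissipates the velocities in it. -/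
noncomputable def energy (P : Plasma ι) (X : State ι) : ℝ :=
  ∑ α, (P.T α * ‖X.ρ α‖ ^ 2 + P.m α * ‖X.u α‖ ^ 2) + (‖X.E‖ ^ 2 + ‖X.B‖ ^ 2) / (4 * π)

/-- A cross term whose time derivative dissipates the densities. -/
noncomputable def densityCorrector (P : Plasma ι) (k : Vec ℝ) (X : State ι) : ℝ :=
  ∑ α, P.m α * ⟪X.u α, grad k (X.ρ α)⟫_ℝ

/-- A cross term, built on a charged species `β`, whose time derivative dissipates the electric
field. -/
noncomputable def electricCorrector (P : Plasma ι) (β : ι) (X : State ι) : ℝ :=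
  -(P.m β / P.q β * ⟪X.u β, X.E⟫_ℝ)

/-- A cross term whose time derivative dissipates the magnetic field. -/
noncomputable def magneticCorrector (P : Plasma ι) (k : Vec ℝ) (X : State ι) : ℝ :=
  -(P.c⁻¹ * ⟪X.E, curl k X.B⟫_ℝ)

/-- The rate of change of `densityCorrector` along solutions. -/
noncomputable def densityRate (P : Plasma ι) (k : Vec ℝ) (X : State ι) : ℝ :=
  ∑ α, (P.m α * ‖div k (X.u α)‖ ^ 2 - P.m α * P.ν α * ⟪X.u α, grad k (X.ρ α)⟫_ℝ
    - P.T α * ‖grad k (X.ρ α)‖ ^ 2) - 4 * π * ‖chargeDensity P X‖ ^ 2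

/-- The rate of change of `electricCorrector` along solutions. -/
noncomputable def electricRate (P : Plasma ι) (β : ι) (k : Vec ℝ) (X : State ι) : ℝ :=
  -‖X.E‖ ^ 2 + P.T β / P.q β * ⟪grad k (X.ρ β), X.E⟫_ℝ
    + P.m β * P.ν β / P.q β * ⟪X.u β, X.E⟫_ℝ - P.m β * P.c / P.q β * ⟪curl k (X.u β), X.B⟫_ℝ
    + 4 * π * P.m β / P.q β * ⟪current P X, X.u β⟫_ℝ

/-- The rate of change of `magneticCorrector` along solutions. -/
noncomputable def magneticRate (P : Plasma ι) (k : Vec ℝ) (X : State ι) : ℝ :=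
  -(‖k‖ ^ 2 * ‖X.B‖ ^ 2) + ‖curl k X.E‖ ^ 2 + 4 * π / P.c * ⟪current P X, curl k X.B⟫_ℝ

section Rates

variable {P : Plasma ι} {k : Vec ℝ} {U : ℝ → State ι} {t : ℝ}

theorem hasDerivWithinAt_energy (hU : IsSolution P k U) (ht : 0 ≤ t) :
    HasDerivWithinAt (fun τ ↦ energy P (U τ))
      (-2 * ∑ α, P.m α * P.ν α * ‖(U t).u α‖ ^ 2) (Ici 0) t := by
  have hfluid := HasDerivWithinAt.fun_sum (u := .univ) fun α _ ↦
    ((hU.continuity t ht α).norm_sq.const_mul (P.T α)).fun_add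
      ((hU.momentum t ht α).norm_sq.const_mul (P.m α))
  have hfield := ((hU.ampere t ht).norm_sq.fun_add (hU.faraday t ht).norm_sq).div_const (4 * π)
  have hterm (α : ι) : P.T α * (2 * ⟪(U t).ρ α, -div k ((U t).u α)⟫_ℝ)
      + P.m α * (2 * ⟪(U t).u α, (P.m α)⁻¹ • (P.q α • (U t).E - P.T α • grad k ((U t).ρ α))
        - P.ν α • (U t).u α⟫_ℝ)
      = -2 * (P.m α * P.ν α * ‖(U t).u α‖ ^ 2) + 2 * ⟪(U t).E, P.q α • (U t).u α⟫_ℝ := by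
    have hm := (P.m_pos α).ne'
    simp only [inner_sub_right, inner_neg_right, real_inner_smul_right, inner_grad_right,
      real_inner_self_eq_norm_sq, real_inner_comm ((U t).ρ α), real_inner_comm ((U t).E)]
    field_simp
    ring
  refine (hfluid.fun_add hfield).congr_deriv ?_
  rw [Finset.sum_congr rfl fun α _ ↦ hterm α, Finset.sum_add_distrib, ← Finset.mul_sum,
    ← Finset.mul_sum, ← inner_sum, ← current]
  simp only [inner_sub_right, inner_neg_right, real_inner_smul_right, ← inner_curl_left k (U t).E,
    real_inner_comm (curl k (U t).E)]
  field_simp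
  ring

theorem hasDerivWithinAt_densityCorrector (hU : IsSolution P k U) (ht : 0 ≤ t) :
    HasDerivWithinAt (fun τ ↦ densityCorrector P k (U τ)) (densityRate P k (U t)) (Ici 0) t := by
  have hgrad (α : ι) : HasDerivWithinAt (fun τ ↦ grad k ((U τ).ρ α))
      (grad k (-div k ((U t).u α))) (Ici 0) t :=
    (grad k).hasFDerivAt.comp_hasDerivWithinAt t (hU.continuity t ht α)
  have hsum := HasDerivWithinAt.fun_sum (u := .univ) fun α _ ↦
    ((hU.momentum t ht α).inner ℝ (hgrad α)).const_mul (P.m α)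
  have hterm (α : ι) : P.m α * (⟪(U t).u α, grad k (-div k ((U t).u α))⟫_ℝ
      + ⟪(P.m α)⁻¹ • (P.q α • (U t).E - P.T α • grad k ((U t).ρ α)) - P.ν α • (U t).u α,
        grad k ((U t).ρ α)⟫_ℝ)
      = P.m α * ‖div k ((U t).u α)‖ ^ 2 - P.m α * P.ν α * ⟪(U t).u α, grad k ((U t).ρ α)⟫_ℝ
        - P.T α * ‖grad k ((U t).ρ α)‖ ^ 2 - ⟪div k (U t).E, P.q α • (U t).ρ α⟫_ℝ := by
    have hm := (P.m_pos α).ne'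
    simp only [map_neg, inner_neg_right, inner_sub_left, real_inner_smul_left,
      real_inner_smul_right, real_inner_self_eq_norm_sq, inner_grad_right k _ (div k _),
      inner_grad_right k (U t).E]
    field_simp
    ring
  refine hsum.congr_deriv ?_
  simp only [hterm]
  rw [Finset.sum_sub_distrib, ← inner_sum, ← chargeDensity, hU.gauss t ht, real_inner_smul_left,
    real_inner_self_eq_norm_sq, densityRate]

theorem hasDerivWithinAt_electricCorrector {β : ι} (hβ : P.q β ≠ 0) (hU : IsSolution P k U)
    (ht : 0 ≤ t) :
    HasDerivWithinAt (fun τ ↦ electricCorrector P β (U τ)) (electricRate P β k (U t))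
      (Ici 0) t := by
  have hm := (P.m_pos β).ne'
  refine (((hU.momentum t ht β).inner ℝ (hU.ampere t ht)).const_mul
    (P.m β / P.q β)).fun_neg.congr_deriv ?_
  rw [electricRate, inner_curl_left, real_inner_comm (U t |>.u β)]
  simp only [inner_sub_left, inner_sub_right, real_inner_smul_left, real_inner_smul_right,
    real_inner_self_eq_norm_sq]
  field_simp
  ring

theorem hasDerivWithinAt_magneticCorrector (hU : IsSolution P k U) (ht : 0 ≤ t) :
    HasDerivWithinAt (fun τ ↦ magneticCorrector P k (U τ)) (magneticRate P k (U t))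
      (Ici 0) t := by
  have hc := P.c_pos.ne'
  have hcurl : HasDerivWithinAt (fun τ ↦ curl k (U τ).B)
      (curl k (-(P.c • curl k (U t).E))) (Ici 0) t :=
    (curl k).hasFDerivAt.comp_hasDerivWithinAt t (hU.faraday t ht)
  have hB : ‖curl k (U t).B‖ ^ 2 = ‖k‖ ^ 2 * ‖(U t).B‖ ^ 2 := by
    simpa [hU.gauss_magnetic t ht] using norm_curl_sq_add_norm_div_sq k (U t).B
  refine (((hU.ampere t ht).inner ℝ hcurl).const_mul P.c⁻¹).fun_neg.congr_deriv ?_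
  rw [magneticRate, ← hB, ← inner_curl_left]
  simp only [inner_neg_right, inner_sub_left, real_inner_smul_left, real_inner_smul_right,
    real_inner_self_eq_norm_sq]
  field_simp
  ring

end Rates

section Bounds

theorem norm_density_sq_le (X : State ι) (β : ι) : ‖X.ρ β‖ ^ 2 ≤ ∑ α, ‖X.ρ α‖ ^ 2 :=
  Finset.single_le_sum (f := fun α ↦ ‖X.ρ α‖ ^ 2) (fun _ _ ↦ by positivity) (Finset.mem_univ β)

theorem norm_velocity_sq_le (X : State ι) (β : ι) : ‖X.u β‖ ^ 2 ≤ ∑ α, ‖X.u α‖ ^ 2 :=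
  Finset.single_le_sum (f := fun α ↦ ‖X.u α‖ ^ 2) (fun _ _ ↦ by positivity) (Finset.mem_univ β)

theorem norm_current_sq_le (P : Plasma ι) (X : State ι) :
    ‖current P X‖ ^ 2 ≤ (∑ α, P.q α ^ 2) * ∑ α, ‖X.u α‖ ^ 2 :=
  norm_sum_smul_sq_le _ _

variable (P : Plasma ι)

theorem densityRate_le (k : Vec ℝ) (X : State ι) : densityRate P k X ≤
    ∑ α, (P.m α + (P.m α * P.ν α) ^ 2 / (2 * P.T α)) * ((1 + ‖k‖ ^ 2) * ‖X.u α‖ ^ 2)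
      - ∑ α, P.T α / 2 * (‖k‖ ^ 2 * ‖X.ρ α‖ ^ 2) := by
  rw [densityRate, ← Finset.sum_sub_distrib]
  refine (sub_le_self _ (by positivity)).trans (Finset.sum_le_sum fun α _ ↦ ?_)
  have hm := P.m_pos α
  have hT := P.T_pos α
  have hdiv := mul_le_mul_of_nonneg_left (norm_div_sq_le k (X.u α)) hm.le
  have hyoung := mul_inner_le_sq_norm_add (-(P.m α * P.ν α)) (half_pos hT) (X.u α)
    (grad k (X.ρ α))
  rw [neg_sq, show 4 * (P.T α / 2) = 2 * P.T α by ring] at hyoung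
  rw [norm_grad_sq] at hyoung ⊢
  have hslack : 0 ≤ P.m α * ‖X.u α‖ ^ 2
    + (P.m α * P.ν α) ^ 2 / (2 * P.T α) * (‖k‖ ^ 2 * ‖X.u α‖ ^ 2) := by positivity
  linarith

theorem exists_densityRate_le : ∃ τ > 0, ∃ C ≥ 0, ∀ (k : Vec ℝ) (X : State ι),
    densityRate P k X ≤ -τ * (‖k‖ ^ 2 * ∑ α, ‖X.ρ α‖ ^ 2)
      + C * ((1 + ‖k‖ ^ 2) * ∑ α, ‖X.u α‖ ^ 2) := by
  obtain ⟨τ, hτ, hle⟩ := exists_pos_mul_sum_le fun α ↦ half_pos (P.T_pos α)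
  obtain ⟨C, hC, hge⟩ := exists_sum_mul_le
    fun α ↦ P.m α + (P.m α * P.ν α) ^ 2 / (2 * P.T α)
  refine ⟨τ, hτ, C, hC, fun k X ↦ (densityRate_le P k X).trans ?_⟩
  have hρ := hle (fun α ↦ ‖k‖ ^ 2 * ‖X.ρ α‖ ^ 2) fun _ ↦ by positivity
  have hu := hge (fun α ↦ (1 + ‖k‖ ^ 2) * ‖X.u α‖ ^ 2) fun _ ↦ by positivity
  rw [← Finset.mul_sum] at hρ hu
  linarith

theorem electricRate_le (β : ι) (k : Vec ℝ) (X : State ι) :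
    electricRate P β k X ≤ -(1 / 2) * ‖X.E‖ ^ 2 + 1 / 16 * ‖X.B‖ ^ 2
      + (P.T β / P.q β) ^ 2 * (‖k‖ ^ 2 * ‖X.ρ β‖ ^ 2)
      + ((P.m β * P.ν β / P.q β) ^ 2 + 1) * ‖X.u β‖ ^ 2
      + 4 * (P.m β * P.c / P.q β) ^ 2 * (‖k‖ ^ 2 * ‖X.u β‖ ^ 2)
      + (4 * π * P.m β / P.q β) ^ 2 / 4 * ‖current P X‖ ^ 2 := by
  have hpressure := mul_inner_le_sq_norm_add (P.T β / P.q β)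
    (by norm_num : (0 : ℝ) < 1 / 4) (grad k (X.ρ β)) X.E
  have hfriction := mul_inner_le_sq_norm_add (P.m β * P.ν β / P.q β)
    (by norm_num : (0 : ℝ) < 1 / 4) (X.u β) X.E
  have hmagnetic := mul_inner_le_sq_norm_add (-(P.m β * P.c / P.q β))
    (by norm_num : (0 : ℝ) < 1 / 16) (curl k (X.u β)) X.B
  have hcurrent := mul_inner_le_sq_norm_add (4 * π * P.m β / P.q β) one_pos
    (current P X) (X.u β)
  have hcurl := mul_le_mul_of_nonneg_left (norm_curl_sq_le k (X.u β))
    (by positivity : 0 ≤ 4 * (P.m β * P.c / P.q β) ^ 2)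
  rw [norm_grad_sq] at hpressure
  rw [neg_sq, show ∀ l : ℝ, l ^ 2 / (4 * (1 / 16)) = 4 * l ^ 2 by intro l; ring] at hmagnetic
  unfold electricRate
  linarith

theorem exists_electricRate_le (β : ι) : ∃ C ≥ 0, ∀ (k : Vec ℝ) (X : State ι),
    electricRate P β k X ≤ -(1 / 2) * ‖X.E‖ ^ 2 + 1 / 16 * ‖X.B‖ ^ 2
      + C * (‖k‖ ^ 2 * ∑ α, ‖X.ρ α‖ ^ 2 + (1 + ‖k‖ ^ 2) * ∑ α, ‖X.u α‖ ^ 2) := by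
  have hQ : 0 ≤ ∑ α, P.q α ^ 2 := by positivity
  refine ⟨(P.T β / P.q β) ^ 2 + ((P.m β * P.ν β / P.q β) ^ 2 + 1)
    + 4 * (P.m β * P.c / P.q β) ^ 2 + (4 * π * P.m β / P.q β) ^ 2 / 4 * ∑ α, P.q α ^ 2,
    by positivity, fun k X ↦ (electricRate_le P β k X).trans ?_⟩
  set a := (P.T β / P.q β) ^ 2
  set b := (P.m β * P.ν β / P.q β) ^ 2 + 1
  set l := 4 * (P.m β * P.c / P.q β) ^ 2
  set p := (4 * π * P.m β / P.q β) ^ 2 / 4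
  set Q := ∑ α, P.q α ^ 2
  have ha : 0 ≤ a := by positivity
  have hb : 0 ≤ b := by positivity
  have hl : 0 ≤ l := by positivity
  have hp : 0 ≤ p := by positivity
  have hρ := mul_le_mul_of_nonneg_left (norm_density_sq_le X β) (mul_nonneg ha (sq_nonneg ‖k‖))
  have hu := mul_le_mul_of_nonneg_left (norm_velocity_sq_le X β)
    (add_nonneg hb (mul_nonneg hl (sq_nonneg ‖k‖)))
  have hJ := mul_le_mul_of_nonneg_left (norm_current_sq_le P X) hp
  have hslack : 0 ≤ (b + l + p * Q) * (‖k‖ ^ 2 * ∑ α, ‖X.ρ α‖ ^ 2)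
    + (a + l + (a + b + p * Q) * ‖k‖ ^ 2) * ∑ α, ‖X.u α‖ ^ 2 := by positivity
  linarith

theorem exists_magneticRate_le : ∃ C ≥ 0, ∀ (k : Vec ℝ) (X : State ι),
    magneticRate P k X ≤ -(1 / 2) * (‖k‖ ^ 2 * ‖X.B‖ ^ 2) + ‖k‖ ^ 2 * ‖X.E‖ ^ 2
      + C * ∑ α, ‖X.u α‖ ^ 2 := by
  refine ⟨(4 * π / P.c) ^ 2 / 2 * ∑ α, P.q α ^ 2, by positivity, fun k X ↦ ?_⟩
  have hyoung := mul_inner_le_sq_norm_add (4 * π / P.c) one_half_pos (current P X) (curl k X.B)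
  have hJ := mul_le_mul_of_nonneg_left (norm_current_sq_le P X)
    (by positivity : 0 ≤ (4 * π / P.c) ^ 2 / 2)
  rw [magneticRate]
  linarith [norm_curl_sq_le k X.E, norm_curl_sq_le k X.B]

theorem exists_energy_bounds : ∃ a > 0, ∃ b > 0, ∀ X : State ι,
    a * X.normSq ≤ energy P X ∧ energy P X ≤ b * X.normSq := by
  obtain ⟨aT, haT, hleT⟩ := exists_pos_mul_sum_le P.T_pos
  obtain ⟨am, ham, hlem⟩ := exists_pos_mul_sum_le P.m_pos
  obtain ⟨bT, hbT, hTle⟩ := exists_sum_mul_le P.T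
  obtain ⟨bm, hbm, hmle⟩ := exists_sum_mul_le P.m
  refine ⟨min (1 / (4 * π)) (min aT am), by positivity, 1 / (4 * π) + bT + bm, by positivity,
    fun X ↦ ?_⟩
  have hρ : (0 : ι → ℝ) ≤ fun α ↦ ‖X.ρ α‖ ^ 2 := fun _ ↦ by positivity
  have hu : (0 : ι → ℝ) ≤ fun α ↦ ‖X.u α‖ ^ 2 := fun _ ↦ by positivity
  rw [energy, State.normSq, Finset.sum_add_distrib, div_eq_mul_one_div (_ + _)]
  constructor
  · set a := min (1 / (4 * π)) (min aT am)
    have hπ' : a * (‖X.E‖ ^ 2 + ‖X.B‖ ^ 2) ≤ 1 / (4 * π) * (‖X.E‖ ^ 2 + ‖X.B‖ ^ 2) := by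
      gcongr
      exact min_le_left _ _
    have hT : a * ∑ α, ‖X.ρ α‖ ^ 2 ≤ aT * ∑ α, ‖X.ρ α‖ ^ 2 := by
      gcongr
      exact (min_le_right _ _).trans (min_le_left _ _)
    have hm : a * ∑ α, ‖X.u α‖ ^ 2 ≤ am * ∑ α, ‖X.u α‖ ^ 2 := by
      gcongr
      exact (min_le_right _ _).trans (min_le_right _ _)
    linarith [hleT _ hρ, hlem _ hu]
  · have hslack : 0 ≤ (1 / (4 * π) + bm) * ∑ α, ‖X.ρ α‖ ^ 2
      + (1 / (4 * π) + bT) * ∑ α, ‖X.u α‖ ^ 2 + (bT + bm) * (‖X.E‖ ^ 2 + ‖X.B‖ ^ 2) := by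
      positivity
    linarith [hTle _ hρ, hmle _ hu]

theorem exists_abs_densityCorrector_le : ∃ K ≥ 0, ∀ (k : Vec ℝ) (X : State ι),
    |densityCorrector P k X| ≤ K * ((1 + ‖k‖ ^ 2) * X.normSq) := by
  obtain ⟨K, hK, hle⟩ := exists_sum_mul_le P.m
  refine ⟨K, hK, fun k X ↦ ?_⟩
  calc |densityCorrector P k X| ≤ ∑ α, |P.m α * ⟪X.u α, grad k (X.ρ α)⟫_ℝ| :=
        Finset.abs_sum_le_sum_abs _ _
    _ ≤ ∑ α, P.m α * (‖X.u α‖ ^ 2 + ‖k‖ ^ 2 * ‖X.ρ α‖ ^ 2) := by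
        gcongr with α
        rw [abs_mul, abs_of_pos (P.m_pos α), ← norm_grad_sq]
        exact mul_le_mul_of_nonneg_left (abs_inner_le_add_sq_norm _ _) (P.m_pos α).le
    _ ≤ K * ∑ α, (‖X.u α‖ ^ 2 + ‖k‖ ^ 2 * ‖X.ρ α‖ ^ 2) := hle _ fun _ ↦ by positivity
    _ ≤ K * ((1 + ‖k‖ ^ 2) * X.normSq) := by
        gcongr
        rw [Finset.sum_add_distrib, ← Finset.mul_sum, State.normSq]
        have hslack : 0 ≤ ∑ α, ‖X.ρ α‖ ^ 2 + ‖k‖ ^ 2 * ∑ α, ‖X.u α‖ ^ 2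
          + (1 + ‖k‖ ^ 2) * (‖X.E‖ ^ 2 + ‖X.B‖ ^ 2) := by positivity
        linarith

theorem abs_electricCorrector_le (β : ι) (X : State ι) :
    |electricCorrector P β X| ≤ |P.m β / P.q β| * X.normSq := by
  rw [electricCorrector, abs_neg, abs_mul]
  gcongr
  have hslack : 0 ≤ ∑ α, ‖X.ρ α‖ ^ 2 + ‖X.B‖ ^ 2 := by positivity
  rw [State.normSq]
  linarith [abs_inner_le_add_sq_norm (X.u β) X.E, norm_velocity_sq_le X β]

theorem abs_magneticCorrector_le (k : Vec ℝ) (X : State ι) :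
    |magneticCorrector P k X| ≤ P.c⁻¹ * ((1 + ‖k‖ ^ 2) * X.normSq) := by
  have hc := inv_pos.2 P.c_pos
  rw [magneticCorrector, abs_neg, abs_mul, abs_of_pos hc]
  gcongr
  have hslack : 0 ≤ ‖k‖ ^ 2 * ‖X.E‖ ^ 2 + ‖X.B‖ ^ 2
    + (1 + ‖k‖ ^ 2) * (∑ α, ‖X.ρ α‖ ^ 2 + ∑ α, ‖X.u α‖ ^ 2) := by positivity
  rw [State.normSq]
  linarith [abs_inner_le_add_sq_norm X.E (curl k X.B), norm_curl_sq_le k X.B]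

end Bounds

/-- The Lyapunov functional: the energy corrected by the three cross terms. Multiplying it by
`(1 + |k|²)^2` keeps the weights polynomial in `k`. -/
noncomputable def lyapunov (P : Plasma ι) (β : ι) (N κ : ℝ) (k : Vec ℝ) (X : State ι) : ℝ :=
  N * (1 + ‖k‖ ^ 2) ^ 2 * energy P X + κ * (1 + ‖k‖ ^ 2) * densityCorrector P k X
    + 4 * ‖k‖ ^ 2 * electricCorrector P β X + magneticCorrector P k X

/-- The rate of change of `lyapunov` along solutions. -/
noncomputable def lyapunovRate (P : Plasma ι) (β : ι) (N κ : ℝ) (k : Vec ℝ) (X : State ι) : ℝ :=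
  N * (1 + ‖k‖ ^ 2) ^ 2 * (-2 * ∑ α, P.m α * P.ν α * ‖X.u α‖ ^ 2)
    + κ * (1 + ‖k‖ ^ 2) * densityRate P k X
    + 4 * ‖k‖ ^ 2 * electricRate P β k X + magneticRate P k X

theorem hasDerivWithinAt_lyapunov {P : Plasma ι} {β : ι} (hβ : P.q β ≠ 0) (N κ : ℝ) {k : Vec ℝ}
    {U : ℝ → State ι} {t : ℝ} (hU : IsSolution P k U) (ht : 0 ≤ t) :
    HasDerivWithinAt (fun τ ↦ lyapunov P β N κ k (U τ)) (lyapunovRate P β N κ k (U t))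
      (Ici 0) t :=
  ((((hasDerivWithinAt_energy hU ht).const_mul _).fun_add
    ((hasDerivWithinAt_densityCorrector hU ht).const_mul _)).fun_add
    ((hasDerivWithinAt_electricCorrector hβ hU ht).const_mul _)).fun_add
    (hasDerivWithinAt_magneticCorrector hU ht)

theorem exists_abs_correctors_le (P : Plasma ι) (β : ι) {κ : ℝ} (hκ : 0 ≤ κ) :
    ∃ M ≥ 0, ∀ (k : Vec ℝ) (X : State ι),
      |κ * (1 + ‖k‖ ^ 2) * densityCorrector P k X + 4 * ‖k‖ ^ 2 * electricCorrector P β X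
        + magneticCorrector P k X| ≤ M * ((1 + ‖k‖ ^ 2) ^ 2 * X.normSq) := by
  obtain ⟨K, hK, hdensity⟩ := exists_abs_densityCorrector_le P
  have hc := inv_pos.2 P.c_pos
  refine ⟨κ * K + 4 * |P.m β / P.q β| + P.c⁻¹, by positivity, fun k X ↦ ?_⟩
  have hn := X.normSq_nonneg
  calc |κ * (1 + ‖k‖ ^ 2) * densityCorrector P k X + 4 * ‖k‖ ^ 2 * electricCorrector P β X
        + magneticCorrector P k X|
      ≤ κ * (1 + ‖k‖ ^ 2) * |densityCorrector P k X| + 4 * ‖k‖ ^ 2 * |electricCorrector P β X|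
        + |magneticCorrector P k X| := by
        refine (abs_add_three _ _ _).trans_eq ?_
        rw [abs_mul, abs_mul (4 * ‖k‖ ^ 2), abs_of_nonneg (by positivity : 0 ≤ κ * (1 + ‖k‖ ^ 2)),
          abs_of_nonneg (by positivity : 0 ≤ 4 * ‖k‖ ^ 2)]
    _ ≤ κ * (1 + ‖k‖ ^ 2) * (K * ((1 + ‖k‖ ^ 2) * X.normSq))
        + 4 * ‖k‖ ^ 2 * (|P.m β / P.q β| * X.normSq) + P.c⁻¹ * ((1 + ‖k‖ ^ 2) * X.normSq) := by
        gcongr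
        exacts [hdensity k X, abs_electricCorrector_le P β X, abs_magneticCorrector_le P k X]
    _ ≤ (κ * K + 4 * |P.m β / P.q β| + P.c⁻¹) * ((1 + ‖k‖ ^ 2) ^ 2 * X.normSq) := by
        have hslack : 0 ≤ 4 * |P.m β / P.q β| * X.normSq * (1 + ‖k‖ ^ 2 + ‖k‖ ^ 4)
          + P.c⁻¹ * (‖k‖ ^ 2 * (1 + ‖k‖ ^ 2)) * X.normSq := by positivity
        linarith

theorem exists_lyapunov_bounds (P : Plasma ι) (β : ι) {κ : ℝ} (hκ : 0 ≤ κ) :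
    ∃ N₀, ∀ N ≥ N₀, ∃ b > 0, ∀ (k : Vec ℝ) (X : State ι),
      (1 + ‖k‖ ^ 2) ^ 2 * X.normSq ≤ lyapunov P β N κ k X ∧
        lyapunov P β N κ k X ≤ b * (1 + ‖k‖ ^ 2) ^ 2 * X.normSq := by
  obtain ⟨a₁, ha₁, b₁, hb₁, henergy⟩ := exists_energy_bounds P
  obtain ⟨M, hM, hcorrectors⟩ := exists_abs_correctors_le P β hκ
  refine ⟨(M + 1) / a₁, fun N hN ↦ ?_⟩
  have hN₀ : 0 < N := (by positivity : 0 < (M + 1) / a₁).trans_le hN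
  refine ⟨N * b₁ + M, by positivity, fun k X ↦ ?_⟩
  have hn := X.normSq_nonneg
  set w := (1 + ‖k‖ ^ 2) ^ 2 with hw
  obtain ⟨hlow, hup⟩ := abs_le.1 (hcorrectors k X)
  have henergy_low : (M + 1) * (w * X.normSq) ≤ N * w * energy P X := calc
    (M + 1) * (w * X.normSq) ≤ N * a₁ * (w * X.normSq) := by
      gcongr
      exact (div_le_iff₀ ha₁).1 hN
    _ = N * w * (a₁ * X.normSq) := by ring
    _ ≤ N * w * energy P X := by gcongr; exact (henergy X).1
  have henergy_up : N * w * energy P X ≤ N * w * (b₁ * X.normSq) := by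
    gcongr
    exact (henergy X).2
  rw [lyapunov, ← hw]
  constructor <;> linarith

/- Choice of the weights: the term `s * x` of `D₃` is absorbed by the loss in `4 * s * D₂`, the
densities in the latter by the loss in `κ * (1 + s) * D₁`, and the velocities in all three by the
friction. -/
theorem weighted_rates_le {N κ d τ C₁ C₂ C₃ s r a x y D₀ D₁ D₂ D₃ : ℝ} (hN : 0 ≤ N) (hκ : 0 ≤ κ)
    (hC₂ : 0 ≤ C₂) (hC₃ : 0 ≤ C₃) (hs : 0 ≤ s) (hr : 0 ≤ r) (ha : 0 ≤ a) (hx : 0 ≤ x)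
    (hκτ : κ * τ = 4 * C₂ + 1) (hNd : κ * C₁ + 4 * C₂ + C₃ + 1 ≤ N * (2 * d))
    (hD₀ : d * a ≤ D₀) (hD₁ : D₁ ≤ -τ * (s * r) + C₁ * ((1 + s) * a))
    (hD₂ : D₂ ≤ -(1 / 2) * x + 1 / 16 * y + C₂ * (s * r + (1 + s) * a))
    (hD₃ : D₃ ≤ -(1 / 2) * (s * y) + s * x + C₃ * a) :
    N * (1 + s) ^ 2 * (-2 * D₀) + κ * (1 + s) * D₁ + 4 * s * D₂ + D₃
      ≤ -(s / 4) * (r + a + x + y) := by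
  have hvelocity : N * (1 + s) ^ 2 * (-2 * D₀)
      ≤ -(κ * C₁ + 4 * C₂ + C₃ + 1) * ((1 + s) ^ 2 * a) := by
    have hD := mul_le_mul_of_nonneg_left hD₀ (by positivity : 0 ≤ N * (1 + s) ^ 2)
    have hNa := mul_le_mul_of_nonneg_right hNd (by positivity : 0 ≤ (1 + s) ^ 2 * a)
    linarith
  have hdensity : κ * (1 + s) * D₁
      ≤ -(4 * C₂ + 1) * ((1 + s) * (s * r)) + κ * C₁ * ((1 + s) ^ 2 * a) := by
    rw [← hκτ]
    linarith [mul_le_mul_of_nonneg_left hD₁ (by positivity : 0 ≤ κ * (1 + s))]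
  have helectric := mul_le_mul_of_nonneg_left hD₂ (by positivity : 0 ≤ 4 * s)
  have hslack : 0 ≤ (4 * C₂ * (1 + s) + C₃ * (2 * s + s ^ 2) + 1 + 7 / 4 * s + s ^ 2) * a
      + (4 * C₂ * s + 3 / 4 * s + s ^ 2) * r + 3 / 4 * (s * x) := by positivity
  linarith

theorem exists_lyapunovRate_le (P : Plasma ι) (β : ι) :
    ∃ κ ≥ 0, ∃ N₀, ∀ N ≥ N₀, ∀ (k : Vec ℝ) (X : State ι),
      lyapunovRate P β N κ k X ≤ -(‖k‖ ^ 2 / 4) * X.normSq := by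
  obtain ⟨d, hd, hdissipation⟩ := exists_pos_mul_sum_le fun α ↦ mul_pos (P.m_pos α) (P.ν_pos α)
  obtain ⟨τ, hτ, C₁, hC₁, hdensity⟩ := exists_densityRate_le P
  obtain ⟨C₂, hC₂, helectric⟩ := exists_electricRate_le P β
  obtain ⟨C₃, hC₃, hmagnetic⟩ := exists_magneticRate_le P
  obtain ⟨κ, hκ, hκτ⟩ : ∃ κ ≥ 0, κ * τ = 4 * C₂ + 1 :=
    ⟨(4 * C₂ + 1) / τ, by positivity, div_mul_cancel₀ _ hτ.ne'⟩
  exact ⟨κ, hκ, (κ * C₁ + 4 * C₂ + C₃ + 1) / (2 * d), fun N hN k X ↦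
    weighted_rates_le (le_trans (by positivity) hN) hκ hC₂ hC₃ (by positivity) (by positivity)
      (by positivity) (by positivity) hκτ ((div_le_iff₀ (by positivity)).1 hN)
      (hdissipation (fun α ↦ ‖X.u α‖ ^ 2) fun _ ↦ by positivity) (hdensity k X) (helectric k X)
      (hmagnetic k X)⟩

end Plasma

section Coordinates

variable {ι : Type*} [Fintype ι]

/-- The state with the given coordinate vectors. -/
noncomputable def State.ofCoords (ρ : ι → ℂ) (u : ι → Fin 3 → ℂ) (E B : Fin 3 → ℂ) : State ι :=
  ⟨ρ, fun α ↦ toLp 2 (u α), toLp 2 E, toLp 2 B⟩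

theorem norm_toLp_sq_eq_hsq (v : Fin 3 → ℂ) : ‖toLp 2 v‖ ^ 2 = hsq v := by
  simp only [EuclideanSpace.norm_sq_eq, hsq, Complex.normSq_eq_norm_sq]

theorem State.normSq_ofCoords (ρ : ι → ℂ) (u : ι → Fin 3 → ℂ) (E B : Fin 3 → ℂ) :
    (ofCoords ρ u E B).normSq =
      ∑ α, Complex.normSq (ρ α) + ∑ α, hsq (u α) + hsq E + hsq B := by
  simp only [State.normSq, ofCoords, norm_toLp_sq_eq_hsq, Complex.normSq_eq_norm_sq]

theorem hasDerivWithinAt_toLp {f : ℝ → Fin 3 → ℂ} (hf : Differentiable ℝ f) {v : Vec ℂ} {t : ℝ}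
    (hv : ∀ j, deriv f t j = v j) (s : Set ℝ) :
    HasDerivWithinAt (fun τ ↦ toLp 2 (f τ)) v s t := by
  have hderiv : toLp 2 (deriv f t) = v := by ext j; exact hv j
  rw [← hderiv]
  exact ((PiLp.hasFDerivAt_toLp 2 (f t)).comp_hasDerivAt t (hf t).hasDerivAt).hasDerivWithinAt

theorem IsSolution.of_coords (P : Plasma ι) (k : Fin 3 → ℝ) {ρ : ι → ℝ → ℂ}
    {u : ι → ℝ → Fin 3 → ℂ} {E B : ℝ → Fin 3 → ℂ}
    (hρ : ∀ α, Differentiable ℝ (ρ α)) (hu : ∀ α, Differentiable ℝ (u α))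
    (hE : Differentiable ℝ E) (hB : Differentiable ℝ B)
    (continuity : ∀ α t, deriv (ρ α) t + I * ∑ j, (k j : ℂ) * u α t j = 0)
    (momentum : ∀ α t j, (P.m α : ℂ) * deriv (u α) t j + (P.T α : ℂ) * (I * (k j : ℂ)) * ρ α t
      - (P.q α : ℂ) * E t j + (P.m α : ℂ) * (P.ν α : ℂ) * u α t j = 0)
    (ampere : ∀ t j, deriv E t j - (P.c : ℂ) * cross3 (ikv k) (B t) j
      + 4 * (π : ℂ) * ∑ α, (P.q α : ℂ) * u α t j = 0)
    (faraday : ∀ t j, deriv B t j + (P.c : ℂ) * cross3 (ikv k) (E t) j = 0)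
    (gauss : ∀ t, I * ∑ j, (k j : ℂ) * E t j = 4 * (π : ℂ) * ∑ α, (P.q α : ℂ) * ρ α t)
    (gauss_magnetic : ∀ t, I * ∑ j, (k j : ℂ) * B t j = 0) :
    IsSolution P (toLp 2 k) fun t ↦ .ofCoords (ρ · t) (u · t) (E t) (B t) := by
  have hdiv (v : Fin 3 → ℂ) : div (toLp 2 k) (toLp 2 v) = I * ∑ j, (k j : ℂ) * v j := by
    simp only [div, ikv, Finset.mul_sum, mul_assoc]
  constructor
  case continuity =>
    intro t _ α
    refine (hρ α t).hasDerivAt.hasDerivWithinAt.congr_deriv ?_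
    rw [State.ofCoords, hdiv, eq_neg_iff_add_eq_zero, continuity α t]
  case momentum =>
    refine fun t _ α ↦ hasDerivWithinAt_toLp (hu α) (fun j ↦ ?_) _
    have hm : (P.m α : ℂ) ≠ 0 := ofReal_ne_zero.2 (P.m_pos α).ne'
    simp only [State.ofCoords, PiLp.sub_apply, PiLp.smul_apply, real_smul, grad_apply, ikv,
      ofReal_inv]
    field_simp
    linear_combination momentum α t j
  case ampere =>
    refine fun t _ ↦ hasDerivWithinAt_toLp hE (fun j ↦ ?_) _
    simp only [State.ofCoords, current, PiLp.sub_apply, PiLp.smul_apply, curl_apply, real_smul,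
      ofLp_sum, ofLp_smul, Finset.sum_apply, Pi.smul_apply, ofReal_mul, ofReal_ofNat]
    linear_combination ampere t j
  case faraday =>
    refine fun t _ ↦ hasDerivWithinAt_toLp hB (fun j ↦ ?_) _
    simp only [State.ofCoords, PiLp.neg_apply, PiLp.smul_apply, curl_apply, real_smul]
    linear_combination faraday t j
  case gauss =>
    intro t _
    simp only [State.ofCoords, real_smul, ofReal_mul, ofReal_ofNat, hdiv, gauss, chargeDensity]
  case gauss_magnetic =>
    intro t _
    rw [State.ofCoords, hdiv, gauss_magnetic]

end Coordinates

end EulerMaxwell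

open EulerMaxwell in
theorem stmt_12_general {ι : Type*} [Fintype ι] (P : Plasma ι)
    (hq : ∃ β, P.q β ≠ 0) :
    ∃ C lam : ℝ, 0 < C ∧ 0 < lam ∧
      ∀ (k : Vec ℝ) (U : ℝ → State ι),
        IsSolution P k U → ∀ t : ℝ, 0 ≤ t → √(U t).normSq ≤
          C * rexp (-(lam * ‖k‖ ^ 2 * t) / (1 + ‖k‖ ^ 2) ^ 2) * √(U 0).normSq := by
  obtain ⟨β, hβ⟩ := hq
  obtain ⟨κ, hκ, N₁, hrate⟩ := exists_lyapunovRate_le P β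
  obtain ⟨N₂, hbounds⟩ := exists_lyapunov_bounds P β hκ
  obtain ⟨b, hb, hequiv⟩ := hbounds (max N₁ N₂) (le_max_right _ _)
  refine ⟨√b, 1 / (8 * b), by positivity, by positivity, fun k U hU t ht ↦ ?_⟩
  have hdecay := le_exp_mul_of_lyapunov (by positivity) hb (by positivity)
    (fun τ hτ ↦ hasDerivWithinAt_lyapunov hβ (max N₁ N₂) κ hU hτ)
    (fun τ _ ↦ hrate _ (le_max_left _ _) k (U τ)) (fun τ _ ↦ (hequiv k (U τ)).1)
    (fun τ _ ↦ (hequiv k (U τ)).2) ht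
  calc √(U t).normSq ≤ √(b * (U 0).normSq *
        rexp (-(‖k‖ ^ 2 / 4 / (b * (1 + ‖k‖ ^ 2) ^ 2)) * t)) := Real.sqrt_le_sqrt hdecay
    _ = √b * rexp (-(1 / (8 * b) * ‖k‖ ^ 2 * t) / (1 + ‖k‖ ^ 2) ^ 2) * √(U 0).normSq := by
      rw [mul_right_comm, Real.sqrt_mul (by positivity), Real.sqrt_mul hb.le, ← Real.exp_half]
      congr 3
      field_simp
      ring

/-- Pointwise time-frequency decay estimate
`|Û(t)| ≤ C exp(−λ|k|²t/(1+|k|²)²)|Û(0)|` for the Fourier-transformed linearized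
two-fluid Euler–Maxwell system. -/
theorem stmt_12 (mi me νi νe Ti Te e c : ℝ)
    (hmi : 0 < mi) (hme : 0 < me) (hνi : 0 < νi) (hνe : 0 < νe)
    (hTi : 0 < Ti) (hTe : 0 < Te) (he : 0 < e) (hc : 0 < c) :
    ∃ C lam : ℝ, 0 < C ∧ 0 < lam ∧
      ∀ (k : Fin 3 → ℝ) (ρi ρe : ℝ → ℂ) (ui ue E B : ℝ → Fin 3 → ℂ),
        Differentiable ℝ ρi → Differentiable ℝ ρe →
        Differentiable ℝ ui → Differentiable ℝ ue →
        Differentiable ℝ E → Differentiable ℝ B →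
        (∀ t : ℝ, deriv ρi t + Complex.I * ∑ j, (k j : ℂ) * ui t j = 0) →
        (∀ t : ℝ, deriv ρe t + Complex.I * ∑ j, (k j : ℂ) * ue t j = 0) →
        (∀ (t : ℝ) (j : Fin 3), (mi : ℂ) * deriv ui t j
          + (Ti : ℂ) * (Complex.I * (k j : ℂ)) * ρi t
          - (e : ℂ) * E t j + (mi : ℂ) * (νi : ℂ) * ui t j = 0) →
        (∀ (t : ℝ) (j : Fin 3), (me : ℂ) * deriv ue t j
          + (Te : ℂ) * (Complex.I * (k j : ℂ)) * ρe t
          + (e : ℂ) * E t j + (me : ℂ) * (νe : ℂ) * ue t j = 0) →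
        (∀ (t : ℝ) (j : Fin 3), deriv E t j - (c : ℂ) * cross3 (ikv k) (B t) j
          + 4 * (π : ℂ) * ((e : ℂ) * ui t j - (e : ℂ) * ue t j) = 0) →
        (∀ (t : ℝ) (j : Fin 3), deriv B t j + (c : ℂ) * cross3 (ikv k) (E t) j = 0) →
        (∀ t : ℝ, Complex.I * ∑ j, (k j : ℂ) * E t j
          = 4 * (π : ℂ) * ((e : ℂ) * ρi t - (e : ℂ) * ρe t)) →
        (∀ t : ℝ, Complex.I * ∑ j, (k j : ℂ) * B t j = 0) →
        (let ksq : ℝ := ∑ j, (k j) ^ 2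
         let Usq : ℝ → ℝ := fun t =>
           Complex.normSq (ρi t) + Complex.normSq (ρe t)
             + hsq (ui t) + hsq (ue t) + hsq (E t) + hsq (B t)
         ∀ t : ℝ, 0 ≤ t → Real.sqrt (Usq t) ≤
           C * Real.exp (-(lam * ksq * t) / (1 + ksq) ^ 2) * Real.sqrt (Usq 0)) := by
  let P : EulerMaxwell.Plasma (Fin 2) :=
    { m := ![mi, me], ν := ![νi, νe], T := ![Ti, Te], q := ![e, -e], c := c, c_pos := hc
      m_pos := Fin.forall_fin_two.2 ⟨hmi, hme⟩
      ν_pos := Fin.forall_fin_two.2 ⟨hνi, hνe⟩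
      T_pos := Fin.forall_fin_two.2 ⟨hTi, hTe⟩ }
  obtain ⟨C, lam, hC, hlam, hdecay⟩ := stmt_12_general P ⟨0, he.ne'⟩
  refine ⟨C, lam, hC, hlam, fun k ρi ρe ui ue E B hρi hρe hui hue hE hB hconti hconte hmomi hmome
    hampere hfaraday hgauss hgaussB t ht ↦ ?_⟩
  have hU := EulerMaxwell.IsSolution.of_coords P k (ρ := ![ρi, ρe]) (u := ![ui, ue])
    (Fin.forall_fin_two.2 ⟨hρi, hρe⟩) (Fin.forall_fin_two.2 ⟨hui, hue⟩) hE hB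
    (Fin.forall_fin_two.2 ⟨hconti, hconte⟩)
    (Fin.forall_fin_two.2 ⟨hmomi, by simpa [P] using hmome⟩)
    (by simpa [P, Fin.sum_univ_two, sub_eq_add_neg] using hampere) hfaraday
    (by simpa [P, Fin.sum_univ_two, sub_eq_add_neg] using hgauss) hgaussB
  simpa [EulerMaxwell.State.normSq_ofCoords, EuclideanSpace.real_norm_sq_eq, Fin.sum_univ_two,
    ← add_assoc] using hdecay _ _ hU t ht
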